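/- Suppose β ∈ (−1,0) and (n−1)(1−β) − 2mβ ≥ 0, fix z ∈ (0, 𝔷_β), and let a ∈ (𝔷_β, 𝔷_0) be the unique point with F(a;z) = 0. Then for every x ∈ (0, a], (a − K)/ψ(a;z) ≥ (x − K)/ψ(x;z). -/

import Mathlib

open Set Filter Topology

noncomputable section

/-- The coefficient `A`. -/
def Acoef (n m beta : ℝ) : ℝ := (n * (1 - beta) - m * (1 + beta)) / ((n - m) * (1 + beta))

/-- The coefficient `B(z)`. -/
def Bcoef (n m beta z : ℝ) : ℝ := 2 * n * beta * z ^ (n - m) / ((n - m) * (1 + beta))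

/-- The minimal excessive function `ψ(·;z)` of the skew geometric Brownian motion. -/
def psi (n m beta z x : ℝ) : ℝ :=
  if x ≤ z then x ^ n else Acoef n m beta * x ^ n + Bcoef n m beta z * x ^ m

/-- The function `F(·;z)`. -/
def Ffun (n m beta K z x : ℝ) : ℝ :=
  ((n - 1) * x - n * K) * Acoef n m beta * x ^ (n - m)
    + ((m - 1) * x - m * K) * Bcoef n m beta z

/-- The critical point `𝔷_c = rK/(r-b)`. -/
def zcrit (r b K : ℝ) : ℝ := r * K / (r - b)

/-- The critical point `𝔷_0 = nK/(n-1)`. -/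
def zzero (n K : ℝ) : ℝ := n * K / (n - 1)

/-- The critical point `𝔷_β = nK/(n - (1+β)/(1-β))`. -/
def zbeta (n K beta : ℝ) : ℝ := n * K / (n - (1 + beta) / (1 - beta))

/-- The constant `𝔠`. -/
def gothC (n m beta : ℝ) : ℝ :=
  (-((n - 1) * (n * (1 - beta) - m * (1 + beta))) / (2 * m * (m - 1) * beta)) ^ ((1 : ℝ) / (n - m))

/-- The function `J(·;z)`. -/
def Jfun (n m beta K z x : ℝ) : ℝ :=
  ((n - 1) * x - n * K) * Acoef n m beta * x ^ (-m)
    - ((m - 1) * x - m * K) * Acoef n m beta * z ^ (n - m) * x ^ (-n)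
    - (n - m) * Acoef n m beta * (z - K) * z ^ (-m)

/-- The function `G(·,·;z)`. -/
def Gfun (n m K z x y : ℝ) : ℝ :=
  ((n - 1) * y - n * K) * z ^ m * y ^ (-m) - ((m - 1) * y - m * K) * z ^ n * y ^ (-n)
    - ((n - 1) * x - n * K) * z ^ m * x ^ (-m) + ((m - 1) * x - m * K) * z ^ n * x ^ (-n)

/-- The function `H(·,·;z)`. -/
def Hfun (n m beta K z x y : ℝ) : ℝ :=
  y ^ (-n) * Ffun n m beta K z y
    - (1 - beta) / (1 + beta) * (((n - 1) * x - n * K) * x ^ (-m))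

/-!
For `x ≤ z` the derivative of `(x - K) / ψ(x;z)` has the sign of `nK - (n-1)x`, which is positive
because `z < 𝔷_0`; for `x > z` it has the sign of `-F(x;z)`. Hence the quotient is nondecreasing on
`(0, a]` as soon as `F(·;z) ≤ 0` on `[z, a]`.

For `β < 0` we have `B(z) = (1 - A) z^(n-m)` with `A > 1`, so when `(m-1)x - mK ≤ 0` the function
`F(x;·)` is nondecreasing, and `F(x;z) ≤ F(x;x)`; the latter has the sign of `x - 𝔷_β`. When
`(m-1)x - mK ≥ 0`, both summands of `F` are nonpositive. This gives `F(·;z) ≤ 0` on `[z, 𝔷_β]`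
(`Ffun_nonpos_of_le_zbeta`). The hypothesis `(n-1)(1-β) - 2mβ ≥ 0` makes `F(·;z)` convex on
`[𝔷_β, ∞)` (`convexOn_Ffun`), so on `[𝔷_β, a]` it lies below the larger of its end values, which
are `F(𝔷_β;z) ≤ 0` and `F(a;z) = 0`.
-/

/-- The root `n` exceeds `1`, since the quadratic takes the value `b - r < 0` at `1`. -/
lemma one_lt_root {sigma b r n : ℝ} (hr : 0 < r) (hbr : b < r) (hn : 0 < n)
    (hnroot : 1 / 2 * sigma ^ 2 * n ^ 2 + (b - 1 / 2 * sigma ^ 2) * n - r = 0) : 1 < n := by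
  by_contra h
  push Not at h
  have h1 : 0 ≤ sigma ^ 2 * (n * (1 - n)) := by
    have : 0 ≤ 1 - n := by linarith
    positivity
  nlinarith [mul_pos hn (sub_pos.2 hbr), mul_nonneg hr.le (sub_nonneg.2 h)]

lemma Acoef_pos {n m beta : ℝ} (hb1 : -1 < beta) (hb2 : beta < 1) (hm : m < 0) (hn : 0 < n) :
    0 < Acoef n m beta := by
  unfold Acoef
  apply div_pos
  · nlinarith [mul_pos hn (sub_pos.2 hb2), mul_pos (neg_pos.2 hm) (neg_lt_iff_pos_add.1 hb1)]
  · exact mul_pos (by linarith) (by linarith)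

lemma Bcoef_eq {n m beta z : ℝ} (hb1 : -1 < beta) (hm : m < 0) (hn : 0 < n) :
    Bcoef n m beta z = (1 - Acoef n m beta) * z ^ (n - m) := by
  have h1 : n - m ≠ 0 := by linarith
  have h2 : 1 + beta ≠ 0 := by linarith
  unfold Bcoef Acoef
  field_simp
  ring

lemma one_sub_Acoef_neg {n m beta : ℝ} (hb1 : -1 < beta) (hbneg : beta < 0) (hm : m < 0)
    (hn : 0 < n) : 1 - Acoef n m beta < 0 := by
  have h1 : 0 < n - m := by linarith
  have h2 : 0 < 1 + beta := by linarith
  have : 1 - Acoef n m beta = 2 * n * beta / ((n - m) * (1 + beta)) := by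
    unfold Acoef
    field_simp
    ring
  rw [this]
  exact div_neg_of_neg_of_pos (by nlinarith) (by positivity)

/-- `𝔷_β` lies to the right of `x` (weakly) exactly when the linear factor of
`F(x;x)` is nonpositive. -/
lemma le_zbeta_iff {n K beta x : ℝ} (hb1 : -1 < beta) (hbneg : beta < 0) (hn1 : 1 < n) :
    x ≤ zbeta n K beta ↔ n * (1 - beta) * (x - K) - (1 + beta) * x ≤ 0 := by
  have h1 : 0 < 1 - beta := by linarith
  have h2 : 0 < n - (1 + beta) / (1 - beta) := by
    have : (1 + beta) / (1 - beta) < 1 := by rw [div_lt_one h1]; linarith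
    linarith
  have h3 : n * (1 - beta) * (x - K) - (1 + beta) * x
      = (1 - beta) * (x * (n - (1 + beta) / (1 - beta)) - n * K) := by
    field_simp
    ring
  rw [zbeta, le_div_iff₀ h2, h3]
  constructor
  · intro h
    exact mul_nonpos_of_nonneg_of_nonpos h1.le (by linarith)
  · intro h
    nlinarith [nonpos_of_mul_nonpos_right h h1]

/-- `F(x;z) ≤ 0` for `z ≤ x ≤ 𝔷_β`. Either both summands of `F` are nonpositive, or `F(x;·)` is
nondecreasing and `F(x;z) ≤ F(x;x)`, which has the sign of `x - 𝔷_β`. -/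
lemma Ffun_nonpos_of_le_zbeta {n m beta K z x : ℝ} (hb1 : -1 < beta)
    (hbneg : beta < 0) (hm : m < 0) (hn1 : 1 < n) (hz : 0 < z) (hzx : z ≤ x)
    (hx : x ≤ zbeta n K beta) : Ffun n m beta K z x ≤ 0 := by
  have hn : 0 < n := by linarith
  have hx0 : 0 < x := hz.trans_le hzx
  have hlin := (le_zbeta_iff hb1 hbneg hn1).1 hx
  have hA := Acoef_pos hb1 (by linarith : beta < 1) hm hn
  have hC := one_sub_Acoef_neg hb1 hbneg hm hn
  have hX : 0 < x ^ (n - m) := Real.rpow_pos_of_pos hx0 _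
  have hZ : 0 < z ^ (n - m) := Real.rpow_pos_of_pos hz _
  have hZX : z ^ (n - m) ≤ x ^ (n - m) := Real.rpow_le_rpow hz.le hzx (by linarith)
  have hneg : (n - 1) * x - n * K ≤ 0 := by
    have : (1 - beta) * ((n - 1) * x - n * K) ≤ 0 := by nlinarith
    exact nonpos_of_mul_nonpos_right this (by linarith)
  rw [Ffun, Bcoef_eq hb1 hm hn]
  rcases le_total 0 ((m - 1) * x - m * K) with h | h
  · have h1 : ((n - 1) * x - n * K) * Acoef n m beta * x ^ (n - m) ≤ 0 :=
      mul_nonpos_of_nonpos_of_nonneg (mul_nonpos_of_nonpos_of_nonneg hneg hA.le) hX.le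
    have h2 : ((m - 1) * x - m * K) * ((1 - Acoef n m beta) * z ^ (n - m)) ≤ 0 :=
      mul_nonpos_of_nonneg_of_nonpos h (mul_nonpos_of_nonpos_of_nonneg hC.le hZ.le)
    linarith
  · have h1 : ((m - 1) * x - m * K) * ((1 - Acoef n m beta) * z ^ (n - m))
        ≤ ((m - 1) * x - m * K) * (1 - Acoef n m beta) * x ^ (n - m) := by
      rw [← mul_assoc]
      exact mul_le_mul_of_nonneg_left hZX (mul_nonneg_of_nonpos_of_nonpos h hC.le)
    have h2 : ((n - 1) * x - n * K) * Acoef n m beta + ((m - 1) * x - m * K) *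
        (1 - Acoef n m beta) = (n * (1 - beta) * (x - K) - (1 + beta) * x) / (1 + beta) := by
      have h1 : n - m ≠ 0 := by linarith
      have h2 : 1 + beta ≠ 0 := by linarith
      unfold Acoef
      field_simp
      ring
    have h3 : (n * (1 - beta) * (x - K) - (1 + beta) * x) / (1 + beta) ≤ 0 :=
      div_nonpos_of_nonpos_of_nonneg hlin (by linarith)
    rw [← h2] at h3
    nlinarith [mul_nonpos_of_nonpos_of_nonneg h3 hX.le]

/-- `F(·;z)` is convex to the right of `𝔷_β`: there `F''` has the sign of
`(n-1)(n-m+1)x - nK(n-m-1)`. -/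
lemma convexOn_Ffun {n m beta K z : ℝ} (hK : 0 < K) (hb1 : -1 < beta) (hbneg : beta < 0)
    (hm : m < 0) (hn1 : 1 < n) (hconv : 0 ≤ (n - 1) * (1 - beta) - 2 * m * beta)
    (h0 : 0 < zbeta n K beta) :
    ConvexOn ℝ (Ici (zbeta n K beta)) (Ffun n m beta K z) := by
  have hn : 0 < n := by linarith
  have hA := Acoef_pos hb1 (by linarith : beta < 1) hm hn
  set A := Acoef n m beta with hAdef
  set B := Bcoef n m beta z with hBdef
  have hF1 : ∀ x : ℝ, 0 < x → HasDerivAt (Ffun n m beta K z)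
      ((n - 1) * A * x ^ (n - m) + ((n - 1) * x - n * K) * A * ((n - m) * x ^ (n - m - 1))
        + (m - 1) * B) x := by
    intro x hx
    have e1 := (((hasDerivAt_id x).const_mul (n - 1)).sub_const (n * K)).mul_const A
    have e2 := Real.hasDerivAt_rpow_const (p := n - m) (Or.inl hx.ne')
    have e3 := (((hasDerivAt_id x).const_mul (m - 1)).sub_const (m * K)).mul_const B
    refine ((e1.mul e2).add e3).congr_deriv ?_
    simp only [id, mul_one]
  have hF2 : ∀ x : ℝ, 0 < x → HasDerivAt (fun x : ℝ => (n - 1) * A * x ^ (n - m)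
      + ((n - 1) * x - n * K) * A * ((n - m) * x ^ (n - m - 1)) + (m - 1) * B)
      ((n - 1) * A * ((n - m) * x ^ (n - m - 1)) + ((n - 1) * A * ((n - m) * x ^ (n - m - 1))
        + ((n - 1) * x - n * K) * A * ((n - m) * ((n - m - 1) * x ^ (n - m - 1 - 1))))) x := by
    intro x hx
    have e1 := (((hasDerivAt_id x).const_mul (n - 1)).sub_const (n * K)).mul_const A
    have e2 := Real.hasDerivAt_rpow_const (p := n - m) (Or.inl hx.ne')
    have e3 := Real.hasDerivAt_rpow_const (p := n - m - 1) (Or.inl hx.ne')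
    refine (((e2.const_mul ((n - 1) * A)).add (e1.mul (e3.const_mul (n - m)))).add_const
      ((m - 1) * B)).congr_deriv ?_
    simp only [id, mul_one]
  refine convexOn_of_hasDerivWithinAt2_nonneg (convex_Ici _)
    (fun x hx => (hF1 x (h0.trans_le hx)).continuousAt.continuousWithinAt)
    (fun x hx => (hF1 x ?_).hasDerivWithinAt) (fun x hx => (hF2 x ?_).hasDerivWithinAt) ?_
  · rw [interior_Ici] at hx; exact h0.trans hx
  · rw [interior_Ici] at hx; exact h0.trans hx
  · intro x hx
    rw [interior_Ici] at hx
    have hx0 : 0 < x := h0.trans hx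
    have hlin : 0 < n * (1 - beta) * (x - K) - (1 + beta) * x := by
      by_contra h
      exact absurd ((le_zbeta_iff hb1 hbneg hn1).2 (not_lt.1 h)) (not_le.2 hx)
    have hpow : x ^ (n - m - 1) = x * x ^ (n - m - 1 - 1) := by
      rw [Real.rpow_sub_one hx0.ne' (n - m - 1)]
      field_simp
    -- At `x = 𝔷_β` this expression is a positive multiple of `n - 1 - mβ`, which is nonnegative
    -- since `2(n - 1) ≥ (n - 1)(1 - β) ≥ 2mβ`.
    have hfac : 0 ≤ (n - 1) * (n - m + 1) * x - n * K * (n - m - 1) := by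
      have hmb : m * beta ≤ n - 1 := by nlinarith
      rcases le_total 0 (n - m - 1) with hd | hd
      · have : 0 ≤ (1 - beta) * ((n - 1) * (n - m + 1) * x - n * K * (n - m - 1)) := by
          nlinarith [mul_nonneg hd hlin.le, mul_nonneg hx0.le (sub_nonneg.2 hmb)]
        exact nonneg_of_mul_nonneg_right this (by linarith)
      · have h1 : 0 ≤ (n - 1) * (n - m + 1) * x :=
          mul_nonneg (mul_nonneg (by linarith) (by linarith)) hx0.le
        have h2 : n * K * (n - m - 1) ≤ 0 :=
          mul_nonpos_of_nonneg_of_nonpos (by positivity) hd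
        linarith
    have hP : 0 < x ^ (n - m - 1 - 1) := Real.rpow_pos_of_pos hx0 _
    have hd : 0 < n - m := by linarith
    have := mul_nonneg (mul_nonneg (mul_nonneg hA.le hd.le) hP.le) hfac
    rw [hpow]
    linarith [this]

/-- On `(0, z]` the derivative of `(x - K) / x ^ n` has the sign of `nK - (n-1)x`. -/
lemma monotoneOn_left {n K z : ℝ} (hn1 : 1 < n) (hz0 : (n - 1) * z ≤ n * K) :
    MonotoneOn (fun x : ℝ => (x - K) / x ^ n) (Ioc 0 z) := by
  have hder : ∀ x : ℝ, 0 < x → HasDerivAt (fun x : ℝ => (x - K) / x ^ n)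
      ((1 * x ^ n - (x - K) * (n * x ^ (n - 1))) / (x ^ n) ^ 2) x := fun x hx =>
    ((hasDerivAt_id x).sub_const K).div (Real.hasDerivAt_rpow_const (Or.inl hx.ne'))
      (Real.rpow_pos_of_pos hx _).ne'
  refine monotoneOn_of_hasDerivWithinAt_nonneg (convex_Ioc 0 z)
    (fun x hx => (hder x hx.1).continuousAt.continuousWithinAt)
    (fun x hx => (hder x (interior_subset hx).1).hasDerivWithinAt) ?_
  intro x hx
  obtain ⟨hx0, hxz⟩ := interior_subset hx
  have hpow : x ^ n = x * x ^ (n - 1) := by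
    rw [Real.rpow_sub_one hx0.ne']
    field_simp
  have hP : 0 < x ^ (n - 1) := Real.rpow_pos_of_pos hx0 _
  apply div_nonneg _ (sq_nonneg _)
  have h : 0 ≤ n * K - (n - 1) * x := by nlinarith
  rw [hpow]
  nlinarith [mul_nonneg h hP.le]

/-- To the right of `z` the derivative of `(x - K) / ψ(x;z)` has the sign of `-F(x;z)`. -/
lemma monotoneOn_right {n m beta K z a : ℝ} (hb1 : -1 < beta) (hbneg : beta < 0)
    (hm : m < 0) (hn : 0 < n) (hz : 0 < z)
    (hF : ∀ x ∈ Icc z a, Ffun n m beta K z x ≤ 0) :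
    MonotoneOn (fun x : ℝ => (x - K) / (Acoef n m beta * x ^ n + Bcoef n m beta z * x ^ m))
      (Icc z a) := by
  have hA := Acoef_pos hb1 (by linarith : beta < 1) hm hn
  have hsplit : ∀ x : ℝ, 0 < x → x ^ n = x ^ (n - m) * x ^ m := by
    intro x hx
    rw [← Real.rpow_add hx, sub_add_cancel]
  have hpos : ∀ x ∈ Icc z a, 0 < Acoef n m beta * x ^ n + Bcoef n m beta z * x ^ m := by
    intro x hx
    have hx0 : 0 < x := hz.trans_le hx.1
    have hZX : z ^ (n - m) ≤ x ^ (n - m) := Real.rpow_le_rpow hz.le hx.1 (by linarith)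
    have hZ : 0 < z ^ (n - m) := Real.rpow_pos_of_pos hz _
    rw [hsplit x hx0, Bcoef_eq hb1 hm hn]
    have : 0 < Acoef n m beta * x ^ (n - m) + (1 - Acoef n m beta) * z ^ (n - m) := by
      nlinarith [mul_nonneg hA.le (sub_nonneg.2 hZX)]
    have := mul_pos this (Real.rpow_pos_of_pos hx0 m)
    linarith
  set A := Acoef n m beta with hAdef
  set B := Bcoef n m beta z with hBdef
  have hder : ∀ x ∈ Icc z a, HasDerivAt (fun x : ℝ => (x - K) / (A * x ^ n + B * x ^ m))
      ((1 * (A * x ^ n + B * x ^ m) - (x - K) * (A * (n * x ^ (n - 1)) + B * (m * x ^ (m - 1))))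
        / (A * x ^ n + B * x ^ m) ^ 2) x := by
    intro x hx
    have hx0 : 0 < x := hz.trans_le hx.1
    exact ((hasDerivAt_id x).sub_const K).div
      (((Real.hasDerivAt_rpow_const (Or.inl hx0.ne')).const_mul A).add
        ((Real.hasDerivAt_rpow_const (Or.inl hx0.ne')).const_mul B)) (hpos x hx).ne'
  refine monotoneOn_of_hasDerivWithinAt_nonneg (convex_Icc z a)
    (fun x hx => (hder x hx).continuousAt.continuousWithinAt)
    (fun x hx => (hder x (interior_subset hx)).hasDerivWithinAt) ?_
  intro x hx
  have hx' := interior_subset hx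
  have hx0 : 0 < x := hz.trans_le hx'.1
  apply div_nonneg _ (sq_nonneg _)
  have key : 1 * (A * x ^ n + B * x ^ m)
      - (x - K) * (A * (n * x ^ (n - 1)) + B * (m * x ^ (m - 1)))
      = x ^ m / x * -Ffun n m beta K z x := by
    rw [Real.rpow_sub_one hx0.ne', Real.rpow_sub_one hx0.ne', hsplit x hx0, Ffun, ← hAdef, ← hBdef]
    field_simp
    ring
  rw [key]
  exact mul_nonneg (div_nonneg (Real.rpow_pos_of_pos hx0 _).le hx0.le)
    (neg_nonneg.2 (hF x hx'))

theorem stmt_14 (sigma b r K beta z n m : ℝ)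
    (hsigma : sigma ≠ 0) (hr : 0 < r) (hbr : b < r) (hK : 0 < K)
    (hb1 : -1 < beta) (hb2 : beta < 1) (hbne : beta ≠ 0) (hz : 0 < z)
    (hm : m < 0) (hn : 0 < n)
    (hmroot : 1 / 2 * sigma ^ 2 * m ^ 2 + (b - 1 / 2 * sigma ^ 2) * m - r = 0)
    (hnroot : 1 / 2 * sigma ^ 2 * n ^ 2 + (b - 1 / 2 * sigma ^ 2) * n - r = 0)
    (hbneg : beta < 0)
    (hconv : 0 ≤ (n - 1) * (1 - beta) - 2 * m * beta)
    (hzlt : z < zbeta n K beta)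
    (a : ℝ) (ha : a ∈ Set.Ioo (zbeta n K beta) (zzero n K))
    (haF : Ffun n m beta K z a = 0) :
    ∀ x ∈ Set.Ioc (0 : ℝ) a,
      (x - K) / psi n m beta z x ≤ (a - K) / psi n m beta z a := by
  have hn1 := one_lt_root hr hbr hn hnroot
  obtain ⟨ha1, ha2⟩ := ha
  have hzb : 0 < zbeta n K beta := hz.trans hzlt
  have hza : z < a := hzlt.trans ha1
  -- Left of `𝔷_β` the sign of `F` is known; right of it, convexity bounds `F` by its endpoint values.
  have hF : ∀ x ∈ Icc z a, Ffun n m beta K z x ≤ 0 := by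
    intro x hx
    rcases le_total x (zbeta n K beta) with h | h
    · exact Ffun_nonpos_of_le_zbeta hb1 hbneg hm hn1 hz hx.1 h
    · have hc := convexOn_Ffun (z := z) hK hb1 hbneg hm hn1 hconv hzb
      have hseg : x ∈ segment ℝ (zbeta n K beta) a := by
        rw [segment_eq_Icc ha1.le]
        exact ⟨h, hx.2⟩
      have hle := hc.le_on_segment (mem_Ici.2 le_rfl) (mem_Ici.2 ha1.le) hseg
      rw [haF] at hle
      exact hle.trans
        (max_le (Ffun_nonpos_of_le_zbeta hb1 hbneg hm hn1 hz hzlt.le le_rfl) le_rfl)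
  have hzK : (n - 1) * z ≤ n * K := by
    have h := hza.trans ha2
    rw [zzero, lt_div_iff₀ (by linarith)] at h
    linarith
  have hR := monotoneOn_right hb1 hbneg hm hn hz hF
  have hL := monotoneOn_left hn1 hzK
  have hglue : z ^ n = Acoef n m beta * z ^ n + Bcoef n m beta z * z ^ m := by
    rw [Bcoef_eq hb1 hm hn, mul_assoc, ← Real.rpow_add hz, sub_add_cancel]
    ring
  intro x hx
  have hpa : psi n m beta z a = Acoef n m beta * a ^ n + Bcoef n m beta z * a ^ m :=
    if_neg (not_le.2 hza)
  have hza' := hR ⟨le_rfl, hza.le⟩ ⟨hza.le, le_rfl⟩ hza.le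
  rw [hpa]
  rcases le_or_gt x z with h | h
  · rw [psi, if_pos h]
    have := hL ⟨hx.1, h⟩ ⟨hz, le_rfl⟩ h
    simp only at this hza'
    rw [hglue] at this
    exact this.trans hza'
  · rw [psi, if_neg (not_le.2 h)]
    exact hR ⟨h.le, hx.2⟩ ⟨hza.le, le_rfl⟩ hx.2
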